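/- Let p ≡ 3 (mod 4) be a prime. Then the sum over k from 0 to p^2-1 of ((1/2)_k)^3/(k!)^3 is congruent to p^2 · ∏_{k=1}^{(p^2-1)/2} (4k-1)/(4k+1) modulo p^4 (i.e., the difference has p-adic valuation at least 4). -/

import Mathlib

open Finset

/-- The rising factorial (Pochhammer symbol) `(a)_k = a(a+1)⋯(a+k-1)` for `a : ℚ`. -/
def risingFactorial (a : ℚ) (k : ℕ) : ℚ := ∏ i ∈ Finset.range k, (a + i)

/-! Write `a_k = (1/2)_k / k!` and, for odd `N = 2m + 1`, `b_k = ∏_{j<k} (1 - N²/(2j+1)²)`. The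
products `a_k³ b_k` are the terms of the terminating series `₃F₂(-m, m + 1, 1/2; 1, 1; 1)`, whose
sum is `a_{m/2}²` for even `m` and `0` for odd `m`.

Take `N = p²` and `l = (p² - 1)/4 = m/2`. The right-hand side of the congruence is `a_l²` times a
product congruent to `1` modulo `p²`, and `p ∣ a_l`, so it remains to see that
`∑_{k<p²} a_k³ (1 - b_k) ≡ 0` modulo `p⁴`. With `h(x, c) = (1/2 + x)_c / (1 + x)_c`, the term with
`k = pK + c`, `c < p`, is congruent to `a_{pK}³ (1 - b_{pK}) h(pK, c)³` modulo `p⁴`. Here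
`a_{pK}³ (1 - b_{pK})` is divisible by `p²`, and so is `∑_{c<p} h(py, c)³` for every `p`-integral
`y`: modulo `p²` it is affine in `y`, and it vanishes at `y = 0` by the summation above with
`N = p`, hence at `y = -1/2` by the reflection `c ↦ (p - 1)/2 - c`. -/

section RisingFactorial

lemma risingFactorial_zero (a : ℚ) : risingFactorial a 0 = 1 :=
  prod_range_zero _

lemma risingFactorial_succ (a : ℚ) (k : ℕ) :
    risingFactorial a (k + 1) = risingFactorial a k * (a + k) :=
  prod_range_succ _ _

lemma risingFactorial_add (a : ℚ) (m n : ℕ) :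
    risingFactorial a (m + n) = risingFactorial a m * risingFactorial (a + m) n := by
  simp only [risingFactorial, prod_range_add, Nat.cast_add, add_assoc]

lemma risingFactorial_succ_left (a : ℚ) (k : ℕ) :
    risingFactorial a (k + 1) = a * risingFactorial (a + 1) k := by
  rw [add_comm k, risingFactorial_add, risingFactorial_succ, risingFactorial_zero]
  simp

lemma mul_risingFactorial_add_one (a : ℚ) (k : ℕ) :
    a * risingFactorial (a + 1) k = risingFactorial a k * (a + k) := by
  rw [← risingFactorial_succ_left, risingFactorial_succ]

lemma risingFactorial_one (k : ℕ) : risingFactorial 1 k = k.factorial := by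
  induction k with
  | zero => simp [risingFactorial_zero]
  | succ k ih => rw [risingFactorial_succ, ih, Nat.factorial_succ]; push_cast; ring

lemma risingFactorial_neg_natCast_eq_zero {m k : ℕ} (h : m < k) :
    risingFactorial (-m) k = 0 :=
  prod_eq_zero (mem_range.mpr h) (neg_add_cancel _)

lemma risingFactorial_reflect (a : ℚ) (k : ℕ) :
    risingFactorial (1 - a - k) k = (-1) ^ k * risingFactorial a k := by
  induction k with
  | zero => simp [risingFactorial_zero]
  | succ k ih =>
    have shift : 1 - a - ((k + 1 : ℕ) : ℚ) + 1 = 1 - a - k := by push_cast; ring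
    rw [risingFactorial_succ_left, shift, ih, risingFactorial_succ]
    push_cast
    ring

lemma risingFactorial_centered_odd (x : ℚ) (l : ℕ) :
    risingFactorial (x - l) (2 * l + 1) = x * ∏ j ∈ range l, (x ^ 2 - (j + 1) ^ 2) := by
  induction l with
  | zero => simp [risingFactorial]
  | succ l ih =>
    have shift : x - ((l + 1 : ℕ) : ℚ) + 1 = x - l := by push_cast; ring
    rw [prod_range_succ, ← mul_assoc, ← ih, mul_add_one, risingFactorial_succ,
      risingFactorial_succ_left, shift]
    push_cast
    ring

lemma risingFactorial_centered_even (x : ℚ) (l : ℕ) :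
    risingFactorial (x + 1 / 2 - l) (2 * l) = ∏ j ∈ range l, (x ^ 2 - (j + 1 / 2) ^ 2) := by
  induction l with
  | zero => simp [risingFactorial]
  | succ l ih =>
    have shift : x + 1 / 2 - ((l + 1 : ℕ) : ℚ) + 1 = x + 1 / 2 - l := by push_cast; ring
    rw [prod_range_succ, ← ih, mul_add_one, risingFactorial_succ, risingFactorial_succ_left, shift]
    push_cast
    ring

lemma prod_Icc_eq_risingFactorial_div (n : ℕ) :
    ∏ k ∈ Icc 1 n, ((4 * (k : ℚ) - 1) / (4 * (k : ℚ) + 1)) =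
      risingFactorial (3 / 4) n / risingFactorial (5 / 4) n := by
  induction n with
  | zero => simp [risingFactorial_zero]
  | succ n ih =>
    have factor : (4 * ((n + 1 : ℕ) : ℚ) - 1) / (4 * ((n + 1 : ℕ) : ℚ) + 1) =
        (3 / 4 + n) / (5 / 4 + n) := by
      rw [div_eq_div_iff (by positivity) (by positivity)]
      push_cast
      ring
    rw [prod_Icc_succ_top (by omega), ih, factor, risingFactorial_succ, risingFactorial_succ,
      div_mul_div_comm]

end RisingFactorial

section HalfRatio

/-- The ratio `(1/2 + x)_k / (1 + x)_k`; at `x = 0` it is `(1/2)_k / k!`, the cube root of the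
`k`-th summand of the theorem. -/
def halfRatio (x : ℚ) (k : ℕ) : ℚ :=
  risingFactorial (1 / 2 + x) k / risingFactorial (1 + x) k

lemma halfRatio_eq_prod (x : ℚ) (k : ℕ) :
    halfRatio x k = ∏ j ∈ range k, (1 / 2 + x + j) / (1 + x + j) :=
  (prod_div_distrib _ _).symm

lemma halfRatio_zero_right (x : ℚ) : halfRatio x 0 = 1 := by
  simp [halfRatio_eq_prod]

lemma halfRatio_succ (x : ℚ) (k : ℕ) :
    halfRatio x (k + 1) = halfRatio x k * ((1 / 2 + x + k) / (1 + x + k)) := by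
  simp only [halfRatio_eq_prod, prod_range_succ]

lemma halfRatio_add (x : ℚ) (m n : ℕ) :
    halfRatio x (m + n) = halfRatio x m * halfRatio (x + m) n := by
  simp only [halfRatio, risingFactorial_add, mul_div_mul_comm, add_assoc]

lemma halfRatio_reflect (x : ℚ) (k : ℕ) :
    halfRatio (-(x + k + 1 / 2)) k = (halfRatio x k)⁻¹ := by
  have num : 1 / 2 + -(x + k + 1 / 2) = 1 - (1 + x) - k := by ring
  have den : 1 + -(x + k + 1 / 2) = 1 - (1 / 2 + x) - k := by ring
  rw [halfRatio, num, den, risingFactorial_reflect, risingFactorial_reflect,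
    mul_div_mul_left _ _ (by simp), halfRatio, inv_div]

lemma halfRatio_zero_eq_div_factorial (k : ℕ) :
    halfRatio 0 k = risingFactorial (1 / 2) k / k.factorial := by
  rw [halfRatio, add_zero, add_zero, risingFactorial_one]

lemma halfRatio_zero_eq_centralBinom (k : ℕ) :
    halfRatio 0 k = k.centralBinom / 4 ^ k := by
  induction k with
  | zero => simp [halfRatio_zero_right]
  | succ k ih =>
    have recurrence : ((k : ℚ) + 1) * (k + 1).centralBinom = 2 * (2 * k + 1) * k.centralBinom :=
      mod_cast Nat.succ_mul_centralBinom_succ k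
    rw [halfRatio_succ, ih, eq_div_of_mul_eq (by positivity) ((mul_comm _ _).trans recurrence)]
    field_simp
    ring

lemma halfRatio_zero_ne_zero (k : ℕ) : halfRatio 0 k ≠ 0 := by
  rw [halfRatio_eq_prod]
  exact prod_ne_zero_iff.mpr fun j _ => by positivity

lemma halfRatio_neg_half_eq_div {k q : ℕ} (h : k ≤ q) :
    halfRatio (-(q + 1 / 2)) k = halfRatio 0 (q - k) / halfRatio 0 q := by
  obtain ⟨t, rfl⟩ := Nat.exists_eq_add_of_le' h
  rw [Nat.cast_add, halfRatio_reflect, Nat.add_sub_cancel, halfRatio_add 0 t k, zero_add,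
    div_mul_cancel_left₀ (halfRatio_zero_ne_zero t)]

end HalfRatio

section Whipple

/-- The `k`-th term `(a)_k (b)_k (1/2)_k / k!³` of the series `₃F₂(a, b, 1/2; 1, 1; 1)`. -/
def hypTerm (a b : ℚ) (k : ℕ) : ℚ :=
  risingFactorial a k * risingFactorial b k * risingFactorial (1 / 2) k / (k.factorial : ℚ) ^ 3

lemma hypTerm_zero_right (a b : ℚ) : hypTerm a b 0 = 1 := by
  simp [hypTerm, risingFactorial_zero]

lemma hypTerm_succ (a b : ℚ) (k : ℕ) :
    hypTerm a b (k + 1) = hypTerm a b k * ((a + k) * (b + k) * (1 / 2 + k) / (k + 1) ^ 3) := by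
  simp only [hypTerm, risingFactorial_succ, Nat.factorial_succ, Nat.cast_mul, Nat.cast_succ]
  field_simp

lemma hypTerm_neg_natCast_eq_zero (b : ℚ) {m k : ℕ} (h : m < k) : hypTerm (-m) b k = 0 := by
  simp [hypTerm, risingFactorial_neg_natCast_eq_zero h]

lemma mul_hypTerm_add_one_left (a b : ℚ) (k : ℕ) :
    a * hypTerm (a + 1) b k = (a + k) * hypTerm a b k := by
  simp only [hypTerm]
  linear_combination risingFactorial b k * risingFactorial (1 / 2) k / (k.factorial : ℚ) ^ 3 *
    mul_risingFactorial_add_one a k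

lemma mul_hypTerm_add_one_right (a b : ℚ) (k : ℕ) :
    b * hypTerm a (b + 1) k = (b + k) * hypTerm a b k := by
  simp only [hypTerm]
  linear_combination risingFactorial a k * risingFactorial (1 / 2) k / (k.factorial : ℚ) ^ 3 *
    mul_risingFactorial_add_one b k

-- A Wilf–Zeilberger pair in steps of two for `m`; the certificate is a multiple of `k³` times the
-- term with parameters `-(m + 2)` and `m + 1`, which is contiguous to both summands.
lemma sum_hypTerm_telescope (m : ℚ) (n : ℕ) :
    (m + 1) * (m + 2) * ((m + 2) ^ 2 * ∑ k ∈ range n, hypTerm (-(m + 2)) (m + 3) k -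
        (m + 1) ^ 2 * ∑ k ∈ range n, hypTerm (-m) (m + 1) k) =
      -2 * (2 * m + 3) * n ^ 3 * hypTerm (-(m + 2)) (m + 1) n := by
  induction n with
  | zero => simp
  | succ k ih =>
    have lower : (m + 1) * (m + 2) * hypTerm (-m) (m + 1) k =
        (k - (m + 1)) * (k - (m + 2)) * hypTerm (-(m + 2)) (m + 1) k := by
      have h₁ := mul_hypTerm_add_one_left (-(m + 2)) (m + 1) k
      have h₂ := mul_hypTerm_add_one_left (-(m + 1)) (m + 1) k
      rw [show -(m + 2) + 1 = -(m + 1) by ring] at h₁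
      rw [show -(m + 1) + 1 = -m by ring] at h₂
      linear_combination -(m + 2) * h₂ + (k - (m + 1)) * h₁
    have upper : (m + 1) * (m + 2) * hypTerm (-(m + 2)) (m + 3) k =
        (m + 1 + k) * (m + 2 + k) * hypTerm (-(m + 2)) (m + 1) k := by
      have h₁ := mul_hypTerm_add_one_right (-(m + 2)) (m + 1) k
      have h₂ := mul_hypTerm_add_one_right (-(m + 2)) (m + 2) k
      rw [show m + 1 + 1 = m + 2 by ring] at h₁
      rw [show m + 2 + 1 = m + 3 by ring] at h₂
      linear_combination (m + 1) * h₂ + (m + 2 + k) * h₁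
    have next : ((k + 1 : ℕ) : ℚ) ^ 3 * hypTerm (-(m + 2)) (m + 1) (k + 1) =
        hypTerm (-(m + 2)) (m + 1) k * ((-(m + 2) + k) * (m + 1 + k) * (1 / 2 + k)) := by
      rw [hypTerm_succ]
      push_cast
      field_simp
    rw [sum_range_succ, sum_range_succ, mul_assoc _ (_ ^ 3), next]
    linear_combination ih + (m + 2) ^ 2 * upper - (m + 1) ^ 2 * lower

lemma sum_hypTerm_add_two {m n : ℕ} (h : m + 2 < n) :
    ∑ k ∈ range n, hypTerm (-(m + 2 : ℕ)) ((m + 2 : ℕ) + 1) k =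
      (((m : ℚ) + 1) / (m + 2)) ^ 2 * ∑ k ∈ range n, hypTerm (-m) (m + 1) k := by
  have tele := sum_hypTerm_telescope m n
  have boundary : hypTerm (-(m + 2)) (m + 1) n = 0 :=
    mod_cast hypTerm_neg_natCast_eq_zero (m + 1) h
  rw [boundary, mul_zero, mul_eq_zero_iff_left (by positivity), sub_eq_zero] at tele
  have shift : ((m + 2 : ℕ) : ℚ) + 1 = m + 3 := by push_cast; ring
  rw [shift, Nat.cast_add, Nat.cast_two]
  field_simp
  exact tele

lemma sum_hypTerm_even {l n : ℕ} (h : 2 * l < n) :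
    ∑ k ∈ range n, hypTerm (-(2 * l : ℕ)) ((2 * l : ℕ) + 1) k = halfRatio 0 l ^ 2 := by
  induction l with
  | zero =>
    rw [sum_eq_single_of_mem 0 (mem_range.mpr h) fun k _ hk =>
      hypTerm_neg_natCast_eq_zero _ (Nat.pos_of_ne_zero hk)]
    simp [hypTerm_zero_right, halfRatio_zero_right]
  | succ l ih =>
    rw [mul_add_one, sum_hypTerm_add_two (m := 2 * l) h, ih (by omega), halfRatio_succ]
    push_cast
    field_simp
    ring

lemma sum_hypTerm_odd {l n : ℕ} (h : 2 * l + 1 < n) :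
    ∑ k ∈ range n, hypTerm (-(2 * l + 1 : ℕ)) ((2 * l + 1 : ℕ) + 1) k = 0 := by
  induction l with
  | zero =>
    obtain ⟨n, rfl⟩ : ∃ t, n = t + 2 := ⟨n - 2, by omega⟩
    rw [sum_range_succ', sum_range_succ', sum_eq_zero fun k _ =>
      hypTerm_neg_natCast_eq_zero _ (by omega)]
    norm_num [hypTerm, risingFactorial]
  | succ l ih =>
    rw [show 2 * (l + 1) + 1 = 2 * l + 1 + 2 by ring,
      sum_hypTerm_add_two (m := 2 * l + 1) (by omega), ih (by omega), mul_zero]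

/-- The partial products `∏_{j<k} (1 - N²/(2j+1)²)` of Euler's product for `cos (πN/2)`. Multiplying
`((1/2)_k / k!)³` by them turns the sum of the theorem into a terminating `₃F₂`. -/
def cosProd (N : ℚ) (k : ℕ) : ℚ := ∏ j ∈ range k, (1 - (N / (2 * j + 1)) ^ 2)

lemma cosProd_add (N : ℚ) (m n : ℕ) :
    cosProd N (m + n) =
      cosProd N m * ∏ j ∈ range n, (1 - (N / (2 * (m + j) + 1)) ^ 2) := by
  simp only [cosProd, prod_range_add, Nat.cast_add]

lemma hypTerm_eq_halfRatio_mul_cosProd (m : ℚ) (k : ℕ) :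
    hypTerm (-m) (m + 1) k = halfRatio 0 k ^ 3 * cosProd (2 * m + 1) k := by
  induction k with
  | zero => simp [hypTerm_zero_right, halfRatio_zero_right, cosProd]
  | succ k ih =>
    rw [hypTerm_succ, halfRatio_succ, ih, cosProd_add _ k 1, prod_range_one]
    push_cast
    field_simp
    ring

lemma sum_halfRatio_mul_cosProd_of_even {l n : ℕ} (h : 2 * l < n) :
    ∑ k ∈ range n, halfRatio 0 k ^ 3 * cosProd ((4 * l + 1 : ℕ)) k = halfRatio 0 l ^ 2 := by
  have N_eq : ((4 * l + 1 : ℕ) : ℚ) = 2 * (2 * l : ℕ) + 1 := by push_cast; ring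
  simp only [N_eq, ← hypTerm_eq_halfRatio_mul_cosProd, sum_hypTerm_even h]

lemma sum_halfRatio_mul_cosProd_of_odd {l n : ℕ} (h : 2 * l + 1 < n) :
    ∑ k ∈ range n, halfRatio 0 k ^ 3 * cosProd ((4 * l + 3 : ℕ)) k = 0 := by
  have N_eq : ((4 * l + 3 : ℕ) : ℚ) = 2 * (2 * l + 1 : ℕ) + 1 := by push_cast; ring
  simp only [N_eq, ← hypTerm_eq_halfRatio_mul_cosProd, sum_hypTerm_odd h]

lemma mul_prod_Icc_eq_halfRatio_sq_mul (l : ℕ) {N : ℚ} (hN : N = 4 * l + 1) :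
    N * ∏ k ∈ Icc 1 (2 * l), ((4 * (k : ℚ) - 1) / (4 * (k : ℚ) + 1)) =
      halfRatio 0 l ^ 2 * ∏ j ∈ range l,
        (1 - (N / (4 * j + 2)) ^ 2) / (1 - (N / (4 * j + 4)) ^ 2) := by
  have num : risingFactorial (3 / 4) (2 * l) =
      ∏ j ∈ range l, ((N / 4) ^ 2 - ((j : ℚ) + 1 / 2) ^ 2) := by
    rw [← risingFactorial_centered_even, hN]
    congr 1
    ring
  have den : risingFactorial (5 / 4) (2 * l) =
      N * ∏ j ∈ range l, ((N / 4) ^ 2 - ((j : ℚ) + 1) ^ 2) := by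
    have h := risingFactorial_centered_odd (N / 4) l
    rw [show N / 4 - l = 1 / 4 by rw [hN]; ring, risingFactorial_succ_left,
      show (1 / 4 + 1 : ℚ) = 5 / 4 by norm_num] at h
    linear_combination 4 * h
  have N_ne : N ≠ 0 := by rw [hN]; positivity
  rw [prod_Icc_eq_risingFactorial_div, num, den, ← mul_div_assoc, mul_div_mul_left _ _ N_ne,
    ← prod_div_distrib, halfRatio_eq_prod, ← prod_pow, ← prod_mul_distrib]
  refine prod_congr rfl fun j _ => ?_
  have num_factor : (N / 4) ^ 2 - ((j : ℚ) + 1 / 2) ^ 2 =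
      -((j : ℚ) + 1 / 2) ^ 2 * (1 - (N / (4 * j + 2)) ^ 2) := by
    field_simp
    ring
  have den_factor : (N / 4) ^ 2 - ((j : ℚ) + 1) ^ 2 =
      -((j : ℚ) + 1) ^ 2 * (1 - (N / (4 * j + 4)) ^ 2) := by
    field_simp
    ring
  rw [num_factor, den_factor, mul_div_mul_comm, neg_div_neg_eq, ← div_pow, add_zero, add_zero,
    add_comm (1 / 2 : ℚ), add_comm (1 : ℚ)]

end Whipple

section PadicIdeal

open WithZero (exp)

variable {p : ℕ} [Fact p.Prime]

/-- The fractional ideal `pʳ ℤ₍ₚ₎` of `ℚ`: two rational numbers are congruent modulo `pʳ` when their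
difference lies in it. -/
def padicIdeal (p r : ℕ) [Fact p.Prime] : AddSubgroup ℚ :=
  (Rat.padicValuation p).leAddSubgroup (exp (-(r : ℤ)))

lemma padicValuation_natCast_eq_one_iff {n : ℕ} : Rat.padicValuation p n = 1 ↔ ¬p ∣ n := by
  rw [← Int.cast_natCast, Rat.padicValuation_cast, Int.padicValuation_eq_one_iff,
    Int.natCast_dvd_natCast]

lemma padicValuation_two (hp : p ≠ 2) : Rat.padicValuation p 2 = 1 :=
  padicValuation_natCast_eq_one_iff.mpr
    (mt (Nat.prime_dvd_prime_iff_eq Fact.out Nat.prime_two).mp hp)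

namespace padicIdeal

variable {r s : ℕ} {x y : ℚ}

lemma mem_iff : x ∈ padicIdeal p r ↔ Rat.padicValuation p x ≤ exp (-(r : ℤ)) := Iff.rfl

lemma antitone : Antitone fun r => padicIdeal p r := fun r s h =>
  Valuation.leAddSubgroup_monotone _ (WithZero.exp_le_exp.mpr (by omega))

lemma mul_mem (hx : x ∈ padicIdeal p r) (hy : y ∈ padicIdeal p s) :
    x * y ∈ padicIdeal p (r + s) := by
  rw [mem_iff, map_mul, Nat.cast_add, neg_add, WithZero.exp_add]
  exact mul_le_mul' hx hy

lemma pow_mem (hx : x ∈ padicIdeal p r) (n : ℕ) : x ^ n ∈ padicIdeal p (n * r) := by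
  rw [mem_iff, map_pow, Nat.cast_mul, ← mul_neg, ← nsmul_eq_mul, WithZero.exp_nsmul]
  exact pow_le_pow_left' hx n

lemma natCast_mem (n : ℕ) : (n : ℚ) ∈ padicIdeal p 0 :=
  Int.padicValuation_le_one p n

lemma one_mem : (1 : ℚ) ∈ padicIdeal p 0 :=
  mod_cast natCast_mem 1

lemma prime_mem : (p : ℚ) ∈ padicIdeal p 1 :=
  (Rat.padicValuation_self p).le

lemma div_mem (hx : x ∈ padicIdeal p r) (hy : Rat.padicValuation p y = 1) :
    x / y ∈ padicIdeal p r := by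
  rwa [mem_iff, map_div₀, hy, div_one]

lemma padicValuation_add_eq_one (hx : Rat.padicValuation p x = 1) (hy : y ∈ padicIdeal p 1) :
    Rat.padicValuation p (x + y) = 1 := by
  have small : Rat.padicValuation p y < Rat.padicValuation p x :=
    hx ▸ (mem_iff.mp hy).trans_lt (WithZero.exp_lt_exp.mpr (by norm_num : -((1 : ℕ) : ℤ) < 0))
  rw [Valuation.map_add_eq_of_lt_left _ small, hx]

lemma half_mem (hp : p ≠ 2) : (1 / 2 : ℚ) ∈ padicIdeal p 0 :=
  div_mem one_mem (padicValuation_two hp)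

lemma exists_int_mul_eq (hx : x ∈ padicIdeal p r) :
    ∃ a b : ℤ, ¬(p : ℤ) ∣ b ∧ x * b = (p : ℚ) ^ r * a := by
  have p_ne : (p : ℚ) ≠ 0 := mod_cast (Fact.out : p.Prime).ne_zero
  set z : ℚ := x / p ^ r with hz
  have integral : Rat.padicValuation p z ≤ 1 := by
    rw [map_div₀, map_pow, Rat.padicValuation_self, ← WithZero.exp_nsmul, smul_neg, nsmul_one]
    exact div_le_one_of_le₀ hx zero_le
  refine ⟨z.num, z.den, mod_cast Rat.padicValuation_le_one_iff.mp integral, ?_⟩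
  rw [Int.cast_natCast, ← Rat.mul_den_eq_num, hz]
  field_simp

lemma pow_div_natCast_mem {u : ℕ} (hu : ¬p ^ (r + 1) ∣ u) :
    (p : ℚ) ^ (r + s) / u ∈ padicIdeal p s := by
  have hp : p.Prime := Fact.out
  have p_ne : (p : ℚ) ≠ 0 := mod_cast hp.ne_zero
  have u_ne : u ≠ 0 := by rintro rfl; exact hu (dvd_zero _)
  obtain ⟨m, w, hw, rfl⟩ := Nat.exists_eq_pow_mul_and_not_dvd u_ne p hp.ne_one
  have hm : m ≤ r := by
    by_contra! hm
    exact hu ((pow_dvd_pow p hm).mul_right w)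
  obtain ⟨d, rfl⟩ := Nat.exists_eq_add_of_le hm
  have split : (p : ℚ) ^ (m + d + s) / (p ^ m * w : ℕ) = p ^ (d + s) / w := by
    rw [add_assoc, pow_add _ m, Nat.cast_mul, Nat.cast_pow,
      mul_div_mul_left _ _ (pow_ne_zero m p_ne)]
  rw [split]
  refine antitone (by simp : s ≤ (d + s) * 1) (div_mem (pow_mem prime_mem (d + s)) ?_)
  exact padicValuation_natCast_eq_one_iff.mpr hw

lemma prod_mem {ι : Type*} {t : Finset ι} {f : ι → ℚ} (h : ∀ i ∈ t, f i ∈ padicIdeal p 0) :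
    ∏ i ∈ t, f i ∈ padicIdeal p 0 :=
  prod_induction f (· ∈ padicIdeal p 0) (fun _ _ => mul_mem) one_mem h

lemma mul_prod_sub_one_mem {ι : Type*} {t : Finset ι} {f : ι → ℚ}
    (hf : ∀ i ∈ t, f i ∈ padicIdeal p 0) (h : ∀ i ∈ t, x * (f i - 1) ∈ padicIdeal p r) :
    x * (∏ i ∈ t, f i - 1) ∈ padicIdeal p r := by
  classical
  induction t using Finset.induction_on with
  | empty => simp
  | insert i t hi ih =>
    rw [forall_mem_insert] at hf h
    have split : x * (f i * ∏ j ∈ t, f j - 1) =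
        f i * (x * (∏ j ∈ t, f j - 1)) + x * (f i - 1) := by ring
    rw [prod_insert hi, split]
    exact add_mem (antitone (by omega) (mul_mem hf.1 (ih hf.2 h.2))) h.1

lemma prod_sub_one_mem {ι : Type*} {t : Finset ι} {f : ι → ℚ}
    (h : ∀ i ∈ t, f i - 1 ∈ padicIdeal p r) : ∏ i ∈ t, f i - 1 ∈ padicIdeal p r := by
  have integral : ∀ i ∈ t, f i ∈ padicIdeal p 0 := fun i hi =>
    (sub_add_cancel (f i) 1) ▸ add_mem (antitone (Nat.zero_le r) (h i hi)) one_mem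
  simpa using mul_prod_sub_one_mem (x := 1) integral (by simpa using h)

end padicIdeal

end PadicIdeal

section HalfRatioValuation

variable {p : ℕ} [Fact p.Prime]

lemma prime_dvd_centralBinom {i k : ℕ} (hi : i ≠ 0) (h : p ^ i ≤ 2 * (k % p ^ i)) :
    p ∣ k.centralBinom := by
  have hp : p.Prime := Fact.out
  have i_le_log : i ≤ Nat.log p (2 * k) :=
    Nat.le_log_of_pow_le hp.one_lt (h.trans (Nat.mul_le_mul_left 2 (Nat.mod_le _ _)))
  have carries := padicValNat_choose (p := p) (Nat.le_mul_of_pos_left k two_pos)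
    (Nat.lt_succ_self (Nat.log p (2 * k)))
  refine dvd_of_one_le_padicValNat (carries ▸ card_pos.mpr ⟨i, ?_⟩)
  rw [mem_filter, mem_Ico, two_mul, Nat.add_sub_cancel, ← two_mul, ← two_mul]
  exact ⟨⟨Nat.pos_of_ne_zero hi, Nat.lt_succ_of_le i_le_log⟩, h⟩

lemma padicValuation_four_pow (hp : p ≠ 2) (k : ℕ) : Rat.padicValuation p (4 ^ k) = 1 := by
  have four_eq : (4 : ℚ) = 2 ^ 2 := by norm_num
  simp only [four_eq, map_pow, padicValuation_two hp, one_pow]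

lemma halfRatio_zero_mem (hp : p ≠ 2) (k : ℕ) : halfRatio 0 k ∈ padicIdeal p 0 := by
  rw [halfRatio_zero_eq_centralBinom]
  exact padicIdeal.div_mem (padicIdeal.natCast_mem _) (padicValuation_four_pow hp k)

lemma halfRatio_zero_mem_one (hp : p ≠ 2) {i k : ℕ} (hi : i ≠ 0) (h : p ^ i ≤ 2 * (k % p ^ i)) :
    halfRatio 0 k ∈ padicIdeal p 1 := by
  obtain ⟨c, hc⟩ := prime_dvd_centralBinom hi h
  rw [halfRatio_zero_eq_centralBinom, hc, Nat.cast_mul]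
  exact padicIdeal.div_mem (padicIdeal.mul_mem padicIdeal.prime_mem (padicIdeal.natCast_mem c))
    (padicValuation_four_pow hp k)

lemma padicValuation_halfRatio_zero (hp : p ≠ 2) {k : ℕ} (hk : 2 * k < p) :
    Rat.padicValuation p (halfRatio 0 k) = 1 := by
  have not_dvd : ¬p ∣ k.centralBinom := fun h =>
    (Nat.Prime.factorization_pos_of_dvd Fact.out k.centralBinom_ne_zero h).ne'
      (Nat.factorization_centralBinom_eq_zero_of_two_mul_lt hk)
  rw [halfRatio_zero_eq_centralBinom, map_div₀, padicValuation_four_pow hp, div_one]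
  exact padicValuation_natCast_eq_one_iff.mpr not_dvd

end HalfRatioValuation

section CosProd

variable {p : ℕ} [Fact p.Prime]

lemma cosProd_sub_one_mem {N : ℚ} {k r : ℕ}
    (h : ∀ j < k, N / (2 * j + 1) ∈ padicIdeal p r) :
    cosProd N k - 1 ∈ padicIdeal p (2 * r) :=
  padicIdeal.prod_sub_one_mem fun j hj => by
    rw [sub_sub_cancel_left]
    exact neg_mem (padicIdeal.pow_mem (h j (mem_range.mp hj)) 2)

lemma prime_sq_div_two_mul_add_one_mem {m : ℕ} (hm : m < p ^ 2) :
    (p : ℚ) ^ 2 / (2 * m + 1) ∈ padicIdeal p 0 := by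
  have bound : 2 * m + 1 < p ^ 3 :=
    calc 2 * m + 1 < 2 * p ^ 2 := by omega
      _ ≤ p ^ 3 := by
        rw [pow_succ' p 2]
        exact Nat.mul_le_mul_right _ (Fact.out : p.Prime).two_le
  exact mod_cast padicIdeal.pow_div_natCast_mem (r := 2) (s := 0)
    (Nat.not_dvd_of_pos_of_lt (Nat.succ_pos _) bound)

lemma cosProd_prime_sq_mem {k : ℕ} (hk : k < p ^ 2) : cosProd (p ^ 2) k ∈ padicIdeal p 0 := by
  rw [← sub_add_cancel (cosProd _ _) 1]
  exact add_mem (cosProd_sub_one_mem fun j hj => prime_sq_div_two_mul_add_one_mem (hj.trans hk))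
    padicIdeal.one_mem

lemma halfRatio_pow_three_mul_one_sub_cosProd_mem (hp : p ≠ 2) {k : ℕ} (hk : k < p ^ 2) :
    halfRatio 0 k ^ 3 * (1 - cosProd (p ^ 2) k) ∈ padicIdeal p 2 := by
  rcases lt_or_ge (2 * k) (p ^ 2) with small | large
  · have terms (j) (hj : j < k) : (p : ℚ) ^ 2 / (2 * j + 1) ∈ padicIdeal p 1 := by
      have bound : 2 * j + 1 < p ^ 2 := by omega
      exact mod_cast padicIdeal.pow_div_natCast_mem (r := 1) (s := 1)
        (Nat.not_dvd_of_pos_of_lt (Nat.succ_pos _) bound)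
    rw [← neg_sub, mul_neg]
    exact neg_mem (padicIdeal.mul_mem (padicIdeal.pow_mem (halfRatio_zero_mem hp k) 3)
      (cosProd_sub_one_mem terms))
  · have carry : p ^ 2 ≤ 2 * (k % p ^ 2) := by rwa [Nat.mod_eq_of_lt hk]
    have cube := padicIdeal.pow_mem (halfRatio_zero_mem_one hp two_ne_zero carry) 3
    exact padicIdeal.antitone (by omega : 2 ≤ 3 * 1 + 0) (padicIdeal.mul_mem cube
      (sub_mem padicIdeal.one_mem (cosProd_prime_sq_mem hk)))

end CosProd

section Block

variable {p : ℕ} [Fact p.Prime] {y : ℚ}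

lemma padicValuation_one_add_prime_mul_add (hy : y ∈ padicIdeal p 0) {j : ℕ} (hj : j + 1 < p) :
    Rat.padicValuation p (1 + p * y + j) = 1 := by
  have unit : Rat.padicValuation p (j + 1 : ℕ) = 1 :=
    padicValuation_natCast_eq_one_iff.mpr (Nat.not_dvd_of_pos_of_lt j.succ_pos hj)
  have split : 1 + p * y + j = (j + 1 : ℕ) + p * y := by push_cast; ring
  rw [split]
  exact padicIdeal.padicValuation_add_eq_one unit (padicIdeal.mul_mem padicIdeal.prime_mem hy)

lemma half_add_prime_mul_add_mem (hp : p ≠ 2) (hy : y ∈ padicIdeal p 0) (j : ℕ) :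
    1 / 2 + p * y + j ∈ padicIdeal p 0 :=
  add_mem (add_mem (padicIdeal.half_mem hp) (padicIdeal.mul_mem (padicIdeal.natCast_mem p) hy))
    (padicIdeal.natCast_mem j)

lemma exists_halfRatio_prime_mul_eq_mul (hp : p ≠ 2) (hy : y ∈ padicIdeal p 0) {j k : ℕ}
    (hj : j < k) (hk : k < p) :
    ∃ c ∈ padicIdeal p 0, halfRatio (p * y) k = (1 / 2 + p * y + j) * c := by
  have den_unit (i) (hi : i < k) : Rat.padicValuation p (1 + p * y + i) = 1 :=
    padicValuation_one_add_prime_mul_add hy (by omega)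
  have rest : ∏ i ∈ (range k).erase j, (1 / 2 + p * y + i) / (1 + p * y + i) ∈ padicIdeal p 0 :=
    padicIdeal.prod_mem fun i hi =>
      padicIdeal.div_mem (half_add_prime_mul_add_mem hp hy i)
        (den_unit i (mem_range.mp (mem_of_mem_erase hi)))
  refine ⟨_, padicIdeal.div_mem rest (den_unit j hj), ?_⟩
  rw [halfRatio_eq_prod, ← mul_prod_erase _ _ (mem_range.mpr hj)]
  ring

lemma halfRatio_prime_mul_mem (hp : p ≠ 2) (hy : y ∈ padicIdeal p 0) {k : ℕ} (hk : k < p) :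
    halfRatio (p * y) k ∈ padicIdeal p 0 := by
  rw [halfRatio_eq_prod]
  exact padicIdeal.prod_mem fun i hi =>
    padicIdeal.div_mem (half_add_prime_mul_add_mem hp hy i)
      (padicValuation_one_add_prime_mul_add hy (by have := mem_range.mp hi; omega))

lemma halfRatio_prime_mul_mem_one (hp : p ≠ 2) (hy : y ∈ padicIdeal p 0) {k : ℕ}
    (hpk : p ≤ 2 * k) (hk : k < p) : halfRatio (p * y) k ∈ padicIdeal p 1 := by
  obtain ⟨q, hq⟩ : ∃ q, p = 2 * q + 1 := Nat.Prime.odd_of_ne_two Fact.out hp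
  obtain ⟨c, hc, eq⟩ := exists_halfRatio_prime_mul_eq_mul hp hy (by omega : q < k) hk
  have pq : (p : ℚ) = 2 * q + 1 := mod_cast hq
  have factor : 1 / 2 + p * y + q = p * (1 / 2 + y) := by linear_combination -pq / 2
  rw [eq, factor]
  exact padicIdeal.mul_mem
    (padicIdeal.mul_mem padicIdeal.prime_mem (add_mem (padicIdeal.half_mem hp) hy)) hc

/-- The maps that modulo `p²` are affine in `p y`, as `y` ranges over the `p`-integral rational
numbers. -/
def affineModSq (p : ℕ) [Fact p.Prime] : Subsemiring (ℚ → ℚ) where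
  carrier := {f | ∃ A ∈ padicIdeal p 0, ∃ D ∈ padicIdeal p 0, ∀ y ∈ padicIdeal p 0,
    f y - (A + D * (p * y)) ∈ padicIdeal p 2}
  mul_mem' := by
    rintro f g ⟨A, hA, D, hD, hf⟩ ⟨B, hB, E, hE, hg⟩
    refine ⟨A * B, padicIdeal.mul_mem hA hB, A * E + B * D,
      add_mem (padicIdeal.mul_mem hA hE) (padicIdeal.mul_mem hB hD), fun y hy => ?_⟩
    have py : (p : ℚ) * y ∈ padicIdeal p 1 := padicIdeal.mul_mem padicIdeal.prime_mem hy
    have affine : A + D * (p * y) ∈ padicIdeal p 0 :=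
      add_mem hA (padicIdeal.antitone zero_le_one (padicIdeal.mul_mem hD py))
    have g_mem : g y ∈ padicIdeal p 0 := by
      have := add_mem (padicIdeal.antitone zero_le_two (hg y hy))
        (add_mem hB (padicIdeal.antitone zero_le_one (padicIdeal.mul_mem hE py)))
      rwa [sub_add_cancel] at this
    have split : (f * g) y - (A * B + (A * E + B * D) * (p * y)) =
        (f y - (A + D * (p * y))) * g y + (A + D * (p * y)) * (g y - (B + E * (p * y))) +
          D * E * (p * y) ^ 2 := by
      rw [Pi.mul_apply]
      ring
    rw [split]
    exact add_mem (add_mem (padicIdeal.mul_mem (hf y hy) g_mem)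
      (padicIdeal.antitone (by omega) (padicIdeal.mul_mem affine (hg y hy))))
      (padicIdeal.antitone (by omega) (padicIdeal.mul_mem (padicIdeal.mul_mem hD hE)
        (padicIdeal.pow_mem py 2)))
  one_mem' := ⟨1, padicIdeal.one_mem, 0, zero_mem _, fun y _ => by simp⟩
  add_mem' := by
    rintro f g ⟨A, hA, D, hD, hf⟩ ⟨B, hB, E, hE, hg⟩
    refine ⟨A + B, add_mem hA hB, D + E, add_mem hD hE, fun y hy => ?_⟩
    have split : (f + g) y - (A + B + (D + E) * (p * y)) =
        (f y - (A + D * (p * y))) + (g y - (B + E * (p * y))) := by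
      rw [Pi.add_apply]
      ring
    rw [split]
    exact add_mem (hf y hy) (hg y hy)
  zero_mem' := ⟨0, zero_mem _, 0, zero_mem _, fun y _ => by simp⟩

namespace affineModSq

lemma div_mem {s u : ℚ} (hs : s ∈ padicIdeal p 0) (hu : Rat.padicValuation p u = 1) :
    (fun y => (s + p * y) / (u + p * y)) ∈ affineModSq p := by
  have u_mem : u ∈ padicIdeal p 0 := hu.le
  refine ⟨s / u, padicIdeal.div_mem hs hu, (u - s) / u / u,
    padicIdeal.div_mem (padicIdeal.div_mem (sub_mem u_mem hs) hu) hu, fun y hy => ?_⟩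
  have py : (p : ℚ) * y ∈ padicIdeal p 1 := padicIdeal.mul_mem padicIdeal.prime_mem hy
  have den_unit : Rat.padicValuation p (u + p * y) = 1 :=
    padicIdeal.padicValuation_add_eq_one hu py
  have u_ne : u ≠ 0 := by
    rintro rfl
    simp at hu
  have den_ne : u + p * y ≠ 0 := by
    intro h
    simp [h] at den_unit
  have remainder : (s + p * y) / (u + p * y) - (s / u + (u - s) / u / u * (p * y)) =
      (p * y) ^ 2 * (s - u) / u / u / (u + p * y) := by
    field_simp
    ring
  rw [remainder]
  exact padicIdeal.div_mem (padicIdeal.div_mem (padicIdeal.div_mem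
    (padicIdeal.mul_mem (padicIdeal.pow_mem py 2) (sub_mem hs u_mem)) hu) hu) den_unit

lemma halfRatio_mem (hp : p ≠ 2) {k : ℕ} (hk : k < p) :
    (fun y => halfRatio (p * y) k) ∈ affineModSq p := by
  have eq_prod : (fun y => halfRatio (p * y) k) =
      ∏ j ∈ range k, fun y : ℚ => (1 / 2 + j + p * y) / ((j + 1 : ℕ) + p * y) := by
    ext y
    rw [halfRatio_eq_prod, prod_apply]
    refine prod_congr rfl fun j _ => ?_
    push_cast
    ring
  rw [eq_prod]
  refine prod_mem fun j hj => div_mem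
    (add_mem (padicIdeal.half_mem hp) (padicIdeal.natCast_mem j))
    (padicValuation_natCast_eq_one_iff.mpr (Nat.not_dvd_of_pos_of_lt j.succ_pos ?_))
  have := mem_range.mp hj
  omega

lemma apply_mem_of_apply_zero_mem {f : ℚ → ℚ} (hf : f ∈ affineModSq p) (h₀ : f 0 ∈ padicIdeal p 2)
    {y₁ : ℚ} (hy₁ : Rat.padicValuation p y₁ = 1) (h₁ : f y₁ ∈ padicIdeal p 2)
    (hy : y ∈ padicIdeal p 0) : f y ∈ padicIdeal p 2 := by
  obtain ⟨A, -, D, -, approx⟩ := hf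
  have A_mem : A ∈ padicIdeal p 2 := by
    simpa using sub_mem h₀ (approx 0 (zero_mem _))
  have slope_mem : D * p ∈ padicIdeal p 2 := by
    have h := padicIdeal.div_mem (sub_mem (sub_mem h₁ (approx y₁ hy₁.le)) A_mem) hy₁
    have y₁_ne : y₁ ≠ 0 := by
      rintro rfl
      simp at hy₁
    rwa [sub_sub_cancel, add_sub_cancel_left, ← mul_assoc, mul_div_cancel_right₀ _ y₁_ne] at h
  have line_mem : A + D * (p * y) ∈ padicIdeal p 2 := by
    rw [← mul_assoc]
    exact add_mem A_mem (padicIdeal.mul_mem slope_mem hy)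
  rw [← sub_add_cancel (f y) (A + D * (p * y))]
  exact add_mem (approx y hy) line_mem

end affineModSq

lemma sum_halfRatio_zero_pow_three_mem (hp : p % 4 = 3) :
    ∑ k ∈ range (p / 2 + 1), halfRatio 0 k ^ 3 ∈ padicIdeal p 2 := by
  obtain ⟨s, hs⟩ : ∃ s, p = 4 * s + 3 := ⟨p / 4, by omega⟩
  have whipple : ∑ k ∈ range (p / 2 + 1), halfRatio 0 k ^ 3 * cosProd p k = 0 := by
    have := sum_halfRatio_mul_cosProd_of_odd (by omega : 2 * s + 1 < p / 2 + 1)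
    rwa [← hs] at this
  have perturbed : ∑ k ∈ range (p / 2 + 1), halfRatio 0 k ^ 3 =
      -∑ k ∈ range (p / 2 + 1), halfRatio 0 k ^ 3 * (cosProd p k - 1) := by
    simp only [mul_sub_one, sum_sub_distrib, whipple, zero_sub, neg_neg]
  rw [perturbed]
  refine neg_mem (sum_mem fun k hk => ?_)
  rw [mem_range] at hk
  have terms (j) (hj : j < k) : (p : ℚ) / (2 * j + 1) ∈ padicIdeal p 1 := by
    have h := padicIdeal.pow_div_natCast_mem (p := p) (r := 0) (s := 1) (u := 2 * j + 1)
      (Nat.not_dvd_of_pos_of_lt (Nat.succ_pos _) (by rw [zero_add, pow_one]; omega))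
    rw [zero_add, pow_one] at h
    exact mod_cast h
  exact padicIdeal.mul_mem (padicIdeal.pow_mem (halfRatio_zero_mem (by omega) k) 3)
    (cosProd_sub_one_mem terms)

lemma sum_halfRatio_neg_half_pow_three_mem (hp : p % 4 = 3) :
    ∑ k ∈ range (p / 2 + 1), halfRatio (p * -(1 / 2)) k ^ 3 ∈ padicIdeal p 2 := by
  have center : (p : ℚ) * -(1 / 2) = -((p / 2 : ℕ) + 1 / 2) := by
    have : (p : ℚ) = 2 * (p / 2 : ℕ) + 1 := by
      exact_mod_cast (by omega : p = 2 * (p / 2) + 1)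
    linear_combination -this / 2
  have reflected : ∑ k ∈ range (p / 2 + 1), halfRatio (p * -(1 / 2)) k ^ 3 =
      (∑ k ∈ range (p / 2 + 1), halfRatio 0 k ^ 3) / halfRatio 0 (p / 2) ^ 3 := by
    rw [← sum_range_reflect (fun k => halfRatio 0 k ^ 3), sum_div]
    refine sum_congr rfl fun k hk => ?_
    rw [center, halfRatio_neg_half_eq_div (Nat.lt_succ_iff.mp (mem_range.mp hk)), div_pow,
      Nat.add_sub_cancel]
  have unit : Rat.padicValuation p (halfRatio 0 (p / 2) ^ 3) = 1 := by
    rw [map_pow, padicValuation_halfRatio_zero (by omega) (by omega), one_pow]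
  rw [reflected]
  exact padicIdeal.div_mem (sum_halfRatio_zero_pow_three_mem hp) unit

lemma sum_halfRatio_prime_mul_pow_three_mem (hp : p % 4 = 3) (hy : y ∈ padicIdeal p 0) :
    ∑ k ∈ range p, halfRatio (p * y) k ^ 3 ∈ padicIdeal p 2 := by
  have hp2 : p ≠ 2 := by omega
  have lower : ∑ k ∈ range (p / 2 + 1), halfRatio (p * y) k ^ 3 ∈ padicIdeal p 2 := by
    have affine : (∑ k ∈ range (p / 2 + 1), (fun y => halfRatio (p * y) k) ^ 3) ∈ affineModSq p :=
      sum_mem fun k hk =>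
        pow_mem (affineModSq.halfRatio_mem hp2 (by have := mem_range.mp hk; omega)) 3
    have neg_half_unit : Rat.padicValuation p (-(1 / 2)) = 1 := by
      rw [Valuation.map_neg, map_div₀, map_one, padicValuation_two hp2, div_one]
    have := affineModSq.apply_mem_of_apply_zero_mem affine
      (by simpa [Finset.sum_apply] using sum_halfRatio_zero_pow_three_mem hp) neg_half_unit
      (by simpa [Finset.sum_apply] using sum_halfRatio_neg_half_pow_three_mem hp) hy
    simpa [Finset.sum_apply] using this
  have upper (k) (hk : k ∈ Ico (p / 2 + 1) p) : halfRatio (p * y) k ^ 3 ∈ padicIdeal p 2 := by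
    rw [mem_Ico] at hk
    exact padicIdeal.antitone (by omega : 2 ≤ 3 * 1)
      (padicIdeal.pow_mem (halfRatio_prime_mul_mem_one hp2 hy (by omega) hk.2) 3)
  rw [← sum_range_add_sum_Ico _ (by omega : p / 2 + 1 ≤ p)]
  exact add_mem lower (sum_mem upper)

end Block

section Perturbation

variable {p : ℕ} [Fact p.Prime]

lemma halfRatio_sq_mul_prod_sub_one_mem (hp : p ≠ 2) {K k : ℕ} (hK : K < p) (hk : k < p) :
    halfRatio (p * K) k ^ 2 *
      (∏ j ∈ range k, (1 - ((p : ℚ) ^ 2 / (2 * ((K * p : ℕ) + j) + 1)) ^ 2) - 1) ∈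
        padicIdeal p 4 := by
  refine padicIdeal.mul_prod_sub_one_mem (fun j hj => ?_) fun j hj => ?_
  · have index_lt : K * p + j < p ^ 2 :=
      calc K * p + j < (K + 1) * p := by have := mem_range.mp hj; rw [add_one_mul]; omega
        _ ≤ p ^ 2 := by rw [sq]; exact Nat.mul_le_mul_right p hK
    have term := prime_sq_div_two_mul_add_one_mem index_lt
    rw [Nat.cast_add] at term
    exact sub_mem padicIdeal.one_mem (padicIdeal.pow_mem term 2)
  · obtain ⟨c, hc, eq⟩ := exists_halfRatio_prime_mul_eq_mul hp (padicIdeal.natCast_mem K)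
      (mem_range.mp hj) hk
    have cancel : halfRatio (p * K) k * ((p : ℚ) ^ 2 / (2 * ((K * p : ℕ) + j) + 1)) =
        p ^ 2 * (c * (1 / 2)) := by
      rw [eq, mul_div_assoc', div_eq_iff (by positivity)]
      push_cast
      ring
    rw [sub_sub_cancel_left, mul_neg, ← mul_pow, cancel]
    have cofactor := padicIdeal.mul_mem hc (padicIdeal.half_mem hp)
    exact neg_mem (padicIdeal.pow_mem
      (padicIdeal.mul_mem (padicIdeal.pow_mem padicIdeal.prime_mem 2) cofactor) 2)

lemma sum_block_mem (hp : p % 4 = 3) {K : ℕ} (hK : K < p) :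
    ∑ k ∈ range p, halfRatio 0 (K * p + k) ^ 3 * (1 - cosProd (p ^ 2) (K * p + k)) ∈
      padicIdeal p 4 := by
  have hp2 : p ≠ 2 := by omega
  have hKp : K * p < p ^ 2 := by
    rw [sq]
    exact Nat.mul_lt_mul_of_pos_right hK (Fact.out : p.Prime).pos
  set a := halfRatio 0 (K * p)
  set b := cosProd (p ^ 2) (K * p)
  set c := halfRatio (p * K)
  set d : ℕ → ℚ := fun k => ∏ j ∈ range k, (1 - ((p : ℚ) ^ 2 / (2 * ((K * p : ℕ) + j) + 1)) ^ 2)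
  have a_eq (k : ℕ) : halfRatio 0 (K * p + k) = a * c k := by
    rw [halfRatio_add, zero_add, Nat.cast_mul, mul_comm (K : ℚ)]
  have b_eq (k : ℕ) : cosProd (p ^ 2) (K * p + k) = b * d k := cosProd_add _ _ _
  have split : ∑ k ∈ range p, halfRatio 0 (K * p + k) ^ 3 * (1 - cosProd (p ^ 2) (K * p + k)) =
      a ^ 3 * (1 - b) * ∑ k ∈ range p, c k ^ 3 -
        a ^ 3 * b * ∑ k ∈ range p, c k * (c k ^ 2 * (d k - 1)) := by
    rw [mul_sum, mul_sum, ← sum_sub_distrib]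
    refine sum_congr rfl fun k _ => ?_
    rw [a_eq, b_eq]
    ring
  have c_mem {k} (hk : k ∈ range p) : c k ∈ padicIdeal p 0 :=
    halfRatio_prime_mul_mem hp2 (padicIdeal.natCast_mem K) (mem_range.mp hk)
  have corrections : ∑ k ∈ range p, c k * (c k ^ 2 * (d k - 1)) ∈ padicIdeal p 4 :=
    sum_mem fun k hk => padicIdeal.antitone (by omega) (padicIdeal.mul_mem (c_mem hk)
      (halfRatio_sq_mul_prod_sub_one_mem hp2 hK (mem_range.mp hk)))
  have prefactor : a ^ 3 * b ∈ padicIdeal p 0 :=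
    padicIdeal.mul_mem (padicIdeal.pow_mem (halfRatio_zero_mem hp2 _) 3) (cosProd_prime_sq_mem hKp)
  rw [split]
  exact sub_mem (padicIdeal.mul_mem (halfRatio_pow_three_mul_one_sub_cosProd_mem hp2 hKp)
    (sum_halfRatio_prime_mul_pow_three_mem hp (padicIdeal.natCast_mem K)))
    (padicIdeal.antitone (by omega) (padicIdeal.mul_mem prefactor corrections))

lemma sum_halfRatio_mul_one_sub_cosProd_mem (hp : p % 4 = 3) :
    ∑ k ∈ range (p ^ 2), halfRatio 0 k ^ 3 * (1 - cosProd (p ^ 2) k) ∈ padicIdeal p 4 := by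
  have partial_sums (K : ℕ) (hK : K ≤ p) :
      ∑ k ∈ range (K * p), halfRatio 0 k ^ 3 * (1 - cosProd (p ^ 2) k) ∈ padicIdeal p 4 := by
    induction K with
    | zero => simp
    | succ K ih =>
      rw [add_one_mul, sum_range_add]
      exact add_mem (ih (by omega)) (sum_block_mem hp hK)
  simpa only [sq] using partial_sums p le_rfl

lemma sum_halfRatio_sub_sq_mem (hp : p % 4 = 3) {l : ℕ} (hl : p ^ 2 = 4 * l + 1) :
    ∑ k ∈ range (p ^ 2), halfRatio 0 k ^ 3 - halfRatio 0 l ^ 2 ∈ padicIdeal p 4 := by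
  have whipple := sum_halfRatio_mul_cosProd_of_even (by omega : 2 * l < p ^ 2)
  rw [← hl, Nat.cast_pow] at whipple
  simpa only [mul_one_sub, sum_sub_distrib, whipple] using sum_halfRatio_mul_one_sub_cosProd_mem hp

end Perturbation

section Product

variable {p : ℕ} [Fact p.Prime]

lemma one_sub_sq_div_one_sub_sq_sub_one_mem {r : ℕ} {x y : ℚ} (hx : x ∈ padicIdeal p (r + 1))
    (hy : y ∈ padicIdeal p (r + 1)) :
    (1 - x ^ 2) / (1 - y ^ 2) - 1 ∈ padicIdeal p (2 * (r + 1)) := by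
  have hx2 := padicIdeal.pow_mem hx 2
  have hy2 := padicIdeal.pow_mem hy 2
  have unit : Rat.padicValuation p (1 - y ^ 2) = 1 := by
    rw [sub_eq_add_neg]
    exact padicIdeal.padicValuation_add_eq_one (map_one _)
      (neg_mem (padicIdeal.antitone (by omega) hy2))
  have ne : 1 - y ^ 2 ≠ 0 := by
    intro h
    simp [h] at unit
  rw [div_sub_one ne, sub_sub_sub_cancel_left]
  exact padicIdeal.div_mem (sub_mem hy2 hx2) unit

lemma halfRatio_zero_mem_one_of_sq_eq (hp : p % 4 = 3) {l : ℕ} (hl : p ^ 2 = 4 * l + 1) :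
    halfRatio 0 l ∈ padicIdeal p 1 := by
  obtain ⟨s, hs⟩ : ∃ s, p = 4 * s + 3 := ⟨p / 4, by omega⟩
  have l_eq : l = 3 * s + 2 + p * s := by
    subst hs
    nlinarith
  have carry : p ^ 1 ≤ 2 * (l % p ^ 1) := by
    rw [pow_one, l_eq, Nat.add_mul_mod_self_left, Nat.mod_eq_of_lt (by omega)]
    omega
  exact halfRatio_zero_mem_one (by omega) one_ne_zero carry

lemma halfRatio_sq_sub_mul_prod_mem (hp : p % 4 = 3) {l : ℕ} (hl : p ^ 2 = 4 * l + 1) :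
    halfRatio 0 l ^ 2 - (p : ℚ) ^ 2 *
      ∏ k ∈ Icc 1 (2 * l), ((4 * (k : ℚ) - 1) / (4 * (k : ℚ) + 1)) ∈ padicIdeal p 4 := by
  have div_mem {u : ℕ} (hu : 0 < u) (hup : u < p ^ 2) : (p : ℚ) ^ 2 / u ∈ padicIdeal p 1 :=
    padicIdeal.pow_div_natCast_mem (r := 1) (Nat.not_dvd_of_pos_of_lt hu hup)
  have unit_product : ∏ j ∈ range l, (1 - ((p : ℚ) ^ 2 / (4 * j + 2)) ^ 2) /
      (1 - ((p : ℚ) ^ 2 / (4 * j + 4)) ^ 2) - 1 ∈ padicIdeal p 2 := by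
    refine padicIdeal.prod_sub_one_mem fun j hj => ?_
    rw [mem_range] at hj
    have odd_multiple := div_mem (by omega : 0 < 4 * j + 2) (by omega)
    have even_multiple := div_mem (by omega : 0 < 4 * j + 4) (by omega)
    push_cast at odd_multiple even_multiple
    exact one_sub_sq_div_one_sub_sq_sub_one_mem odd_multiple even_multiple
  have hN : (p : ℚ) ^ 2 = 4 * l + 1 := mod_cast hl
  rw [mul_prod_Icc_eq_halfRatio_sq_mul l hN, ← neg_sub, ← mul_sub_one]
  exact neg_mem (padicIdeal.mul_mem
    (padicIdeal.pow_mem (halfRatio_zero_mem_one_of_sq_eq hp hl) 2) unit_product)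

end Product

/-- For a prime `p ≡ 3 (mod 4)`,
`∑_{k=0}^{p^2-1} (1/2)_k^3/k!^3 ≡ p^2 ∏_{k=1}^{(p^2-1)/2} (4k-1)/(4k+1) (mod p^4)`. -/
theorem stmt8 (p : ℕ) (hp : p.Prime) (h : p % 4 = 3) :
    ∃ a b : ℤ, ¬ ((p : ℤ) ∣ b) ∧
      ((∑ k ∈ Finset.range (p ^ 2),
          risingFactorial (1/2) k ^ 3 / (k.factorial : ℚ) ^ 3)
        - (p : ℚ) ^ 2 * ∏ k ∈ Finset.Icc (1 : ℕ) ((p ^ 2 - 1) / 2),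
            ((4 * (k : ℚ) - 1) / (4 * (k : ℚ) + 1))) * (b : ℚ)
      = (p : ℚ) ^ 4 * (a : ℚ) := by
  have : Fact p.Prime := ⟨hp⟩
  have sq_mod : p ^ 2 % 4 = 1 := by rw [Nat.pow_mod, h]
  obtain ⟨l, hl⟩ : ∃ l, p ^ 2 = 4 * l + 1 := ⟨p ^ 2 / 4, by omega⟩
  have upper_limit : (p ^ 2 - 1) / 2 = 2 * l := by omega
  simp only [← div_pow, ← halfRatio_zero_eq_div_factorial, upper_limit]
  apply padicIdeal.exists_int_mul_eq
  rw [← sub_add_sub_cancel _ (halfRatio 0 l ^ 2)]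
  exact add_mem (sum_halfRatio_sub_sq_mem h hl) (halfRatio_sq_sub_mul_prod_mem h hl)
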